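/- arXiv:1604.00944 — 3 statements merged into one kernel-verified Lean document; each statement's English description precedes it below -/
import Mathlib

section
/- Let ε, μ, c1, α ∈ ℝ, let s = s1 + i·s2 ∈ ℂ, and let β = a + i·b ∈ ℂ satisfy β² = ε·μ·s² + (α + i·c1·s)² with a ≠ 0. Then s1·a + s2·b = (s1/(2a))·( a² + b² + (εμ − c1²)·(s1² + s2²) + α² ). -/
/-- Key algebraic identity for the DtN sign analysis: if `β = a + ib` satisfies
`β² = εμs² + (α + i c₁ s)²` with `s = s₁ + i s₂` and `a ≠ 0`, then
`s₁a + s₂b = (s₁/(2a))(a² + b² + (εμ − c₁²)(s₁² + s₂²) + α²)`. -/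
theorem dtn_symbol_key_identity
    (ε μ c1 α s1 s2 a b : ℝ) (s β : ℂ)
    (hs : s = (s1 : ℂ) + s2 * Complex.I) (hβ : β = (a : ℂ) + b * Complex.I)
    (hsq : β ^ 2 = (ε * μ : ℂ) * s ^ 2 + ((α : ℂ) + Complex.I * c1 * s) ^ 2)
    (ha : a ≠ 0) :
    s1 * a + s2 * b =
      (s1 / (2 * a)) * (a ^ 2 + b ^ 2 + (ε * μ - c1 ^ 2) * (s1 ^ 2 + s2 ^ 2) + α ^ 2) := by
  subst hs hβ
  have hre := congrArg Complex.re hsq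
  have him := congrArg Complex.im hsq
  simp [pow_two] at hre him
  field_simp
  -- After clearing `2a`, the claim is `s₁ · Re + s₂ · Im` of the equation for `β²`:
  -- this combination is `Re (conj s · β²)`, in which the terms linear in `α` cancel.
  linear_combination s1 * hre + s2 * him
end

section
/- Let ε, μ, c1, α ∈ ℝ with ε·μ ≥ c1², let s = s1 + i·s2 ∈ ℂ with s1 > 0, and let β = a + i·b ∈ ℂ satisfy β² = ε·μ·s² + (α + i·c1·s)² with a = Re β < 0. Then s1·a + s2·b ≤ 0; equivalently, Re(conj(s)·β) ≤ 0. -/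
/-! Write `k = εμ - c₁² ≥ 0`, so that `β² = k s² + α² + 2 i α c₁ s`. Comparing real and imaginary
parts gives the identity `2a (s₁a + s₂b) = s₁ (|β|² + k|s|² + α²)`. Its right-hand side is
nonnegative, and `a < 0`, so `s₁a + s₂b ≤ 0`. -/


/-- Per-mode nonpositivity of the DtN pairing: if `εμ ≥ c₁²`, `Re s = s₁ > 0`, and
`β = a + ib` is the square root with `a < 0` of `εμs² + (α + i c₁ s)²`, then
`s₁a + s₂b ≤ 0`, equivalently `Re(conj(s)·β) ≤ 0`. -/
theorem dtn_symbol_nonpos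
    (ε μ c1 α s1 s2 a b : ℝ) (s β : ℂ)
    (hεμ : ε * μ ≥ c1 ^ 2)
    (hs : s = (s1 : ℂ) + s2 * Complex.I) (hs1 : 0 < s1)
    (hβ : β = (a : ℂ) + b * Complex.I)
    (hsq : β ^ 2 = (ε * μ : ℂ) * s ^ 2 + ((α : ℂ) + Complex.I * c1 * s) ^ 2)
    (ha : a < 0) :
    s1 * a + s2 * b ≤ 0 ∧ ((starRingEnd ℂ) s * β).re ≤ 0 := by
  have hre := congrArg Complex.re hsq
  have him := congrArg Complex.im hsq
  simp [hs, hβ, pow_two] at hre him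
  have key : 2 * (a * (s1 * a + s2 * b)) =
      s1 * (a ^ 2 + b ^ 2 + (ε * μ - c1 ^ 2) * (s1 ^ 2 + s2 ^ 2) + α ^ 2) := by
    linear_combination s1 * hre + s2 * him
  have hk : 0 ≤ ε * μ - c1 ^ 2 := by linarith
  have hnonneg : 0 ≤ s1 * (a ^ 2 + b ^ 2 + (ε * μ - c1 ^ 2) * (s1 ^ 2 + s2 ^ 2) + α ^ 2) := by
    positivity
  have main : s1 * a + s2 * b ≤ 0 := by
    by_contra! h
    linarith [mul_neg_of_neg_of_pos ha h]
  refine ⟨main, ?_⟩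
  simpa [hs, hβ] using main
end

section
/- Let ε > 0, μ > 0, c1 ∈ ℝ with ε·μ > c1², α ∈ ℝ, and let s ∈ ℂ with Re s > 0. Then z := ε·μ·s² + (α + i·c1·s)² is not a nonpositive real number (i.e., it is not the case that Im z = 0 and Re z ≤ 0), and consequently there exists β ∈ ℂ with β² = z and Re β < 0. -/
/-!
With `d = εμ - c₁² > 0`, expanding gives `z = d s² + 2 i α c₁ s + α²`. If `Im z = 0`, then
`d Im s = -α c₁` because `Re s > 0`, and hence `Re z = d |s|² + α² > 0`. So `z` never lies on the
closed negative real axis, its square roots are not purely imaginary, and one of `±β` has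
negative real part.
-/

/-- Well-definedness of the DtN symbol: if `εμ > c₁²` and `Re s > 0`, then
`z = εμs² + (α + i c₁ s)²` is not a nonpositive real number, and consequently
there exists a square root `β` of `z` with `Re β < 0`. -/
theorem dtn_symbol_well_defined
    (ε μ : ℝ) (hε : 0 < ε) (hμ : 0 < μ) (c1 : ℝ) (hεμ : ε * μ > c1 ^ 2)
    (α : ℝ) (s : ℂ) (hs : 0 < s.re) :
    ¬(((ε * μ : ℂ) * s ^ 2 + ((α : ℂ) + Complex.I * c1 * s) ^ 2).im = 0 ∧
        ((ε * μ : ℂ) * s ^ 2 + ((α : ℂ) + Complex.I * c1 * s) ^ 2).re ≤ 0) ∧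
      ∃ β : ℂ, β ^ 2 = (ε * μ : ℂ) * s ^ 2 + ((α : ℂ) + Complex.I * c1 * s) ^ 2
        ∧ β.re < 0 := by
  have key : ¬(((ε * μ : ℂ) * s ^ 2 + ((α : ℂ) + Complex.I * c1 * s) ^ 2).im = 0 ∧
      ((ε * μ : ℂ) * s ^ 2 + ((α : ℂ) + Complex.I * c1 * s) ^ 2).re ≤ 0) := by
    rintro ⟨him, hre⟩
    simp only [pow_two, Complex.add_re, Complex.add_im, Complex.mul_re, Complex.mul_im,
      Complex.ofReal_re, Complex.ofReal_im, Complex.I_re, Complex.I_im] at him hre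
    have hd : 0 < ε * μ - c1 ^ 2 := sub_pos.2 hεμ
    -- The imaginary part factors as `2 Re s ((εμ - c₁²) Im s + α c₁)`.
    have h1 : (ε * μ - c1 ^ 2) * s.im + α * c1 = 0 := by
      have h2 : 2 * s.re * ((ε * μ - c1 ^ 2) * s.im + α * c1) = 0 := by
        linear_combination him
      exact (mul_eq_zero.1 h2).resolve_left (by positivity)
    -- Eliminating `α c₁` turns the real part into `(εμ - c₁²) |s|² + α²`.
    have h3 : (ε * μ - c1 ^ 2) * (s.re ^ 2 + s.im ^ 2) + α ^ 2 ≤ 0 := by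
      linear_combination hre + 2 * s.im * h1
    have h4 : 0 < (ε * μ - c1 ^ 2) * (s.re ^ 2 + s.im ^ 2) + α ^ 2 := by positivity
    exact h3.not_gt h4
  refine ⟨key, ?_⟩
  obtain ⟨β, hβ⟩ := IsAlgClosed.exists_pow_nat_eq
    ((ε * μ : ℂ) * s ^ 2 + ((α : ℂ) + Complex.I * c1 * s) ^ 2) (n := 2) two_pos
  rcases lt_trichotomy β.re 0 with h | h | h
  · exact ⟨β, hβ, h⟩
  · -- A purely imaginary root would have the nonpositive real square `-(Im β)²`.
    refine absurd ?_ key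
    rw [← hβ]
    simp [pow_two, h, mul_self_nonneg]
  · exact ⟨-β, by rw [neg_sq, hβ], by simpa using h⟩
end
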